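/- arXiv:2007.08829 — 2 statements merged into one kernel-verified Lean document; each statement's English description precedes it below -/
import Mathlib

section
/- Let g ∈ G. Then g belongs to G_ES (i.e., g ∈ G_VaR and the function h_g(p) = (1−p)g(p), with the convention 0·∞ = 0 so that h_g(1) = 0, is concave on (0,1) and left-continuous at 1) if and only if there exists a random variable Z ∈ L^1 such that g(p) = ES_p(Z) for every p ∈ [0,1]. -/
open MeasureTheory Set Filter

variable {Ω : Type*} [MeasurableSpace Ω]

/-- An atomless probability space: every set of positive measure has a subset of
strictly smaller positive measure. -/
def Atomless (μ : Measure Ω) : Prop :=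
  ∀ A : Set Ω, MeasurableSet A → 0 < μ A →
    ∃ B : Set Ω, MeasurableSet B ∧ B ⊆ A ∧ 0 < μ B ∧ μ B < μ A

/-- Value at Risk at level `p`: the left `p`-quantile for `p ∈ (0,1]`, the essential
infimum for `p = 0`.  Values are extended reals. -/
noncomputable def VaR (μ : Measure Ω) (X : Ω → ℝ) (p : ℝ) : EReal :=
  if p = 0 then essInf (fun ω => (X ω : EReal)) μ
  else sInf ((fun x : ℝ => (x : EReal)) '' {x : ℝ | ENNReal.ofReal p ≤ μ {ω | X ω ≤ x}})

/-- Real-valued version of the left `p`-quantile, used as the integrand of ES. -/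
noncomputable def VaRr (μ : Measure Ω) (X : Ω → ℝ) (p : ℝ) : ℝ :=
  sInf {x : ℝ | ENNReal.ofReal p ≤ μ {ω | X ω ≤ x}}

/-- Expected Shortfall at level `p`: `(1/(1-p)) ∫_p^1 VaR_q(X) dq` for `p ∈ [0,1)`,
the essential supremum for `p = 1`. -/
noncomputable def ES (μ : Measure Ω) (X : Ω → ℝ) (p : ℝ) : EReal :=
  if p = 1 then essSup (fun ω => (X ω : EReal)) μ
  else (((1 - p)⁻¹ * ∫ q in Set.Ioo p 1, VaRr μ X q : ℝ) : EReal)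

/-- The `g`-adjusted Expected Shortfall, `sup_{p ∈ [0,1]} (ES_p(X) - g(p))`.
Note that in `EReal` one has `⊤ - ⊤ = ⊥`, matching the convention `∞ - ∞ = -∞`. -/
noncomputable def adjES (μ : Measure Ω) (g : ℝ → EReal) (X : Ω → ℝ) : EReal :=
  ⨆ p ∈ Set.Icc (0:ℝ) 1, (ES μ X p - g p)

/-- The class `𝒢` of risk profiles: increasing functions `[0,1] → (-∞,∞]` that are
not identically `∞`. -/
def IsRiskProfile (g : ℝ → EReal) : Prop :=
  MonotoneOn g (Set.Icc (0:ℝ) 1) ∧ (∀ p ∈ Set.Icc (0:ℝ) 1, g p ≠ ⊥) ∧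
    ∃ p ∈ Set.Icc (0:ℝ) 1, g p ≠ ⊤

/-- Second-order stochastic dominance: `SSD μ X Y` means `X ≥_SSD Y`, i.e. every
risk-averse agent prefers `X` to `Y` (positive values are losses). -/
def SSD (μ : Measure Ω) (X Y : Ω → ℝ) : Prop :=
  ∀ u : ℝ → ℝ, Monotone u → ConcaveOn ℝ Set.univ u →
    ∫ ω, u (-(Y ω)) ∂μ ≤ ∫ ω, u (-(X ω)) ∂μ

/-- The inf-convolution of the functionals `ρ_1, …, ρ_n`. -/
noncomputable def infConv (μ : Measure Ω) {n : ℕ} (ρ : Fin n → ((Ω → ℝ) → EReal))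
    (X : Ω → ℝ) : EReal :=
  ⨅ (Y : Fin n → Ω → ℝ) (_ : (∀ i, Integrable (Y i) μ) ∧ ∀ ω, (∑ i, Y i ω) = X ω),
    ∑ i, ρ i (Y i)

/-- The class `𝒢_VaR`: risk profiles finite on `[0,1)`, left-continuous on `[0,1]`
and right-continuous at `0`. -/
def GVaRProfile (g : ℝ → EReal) : Prop :=
  IsRiskProfile g ∧ (∀ p ∈ Set.Ico (0:ℝ) 1, g p ≠ ⊤) ∧
    (∀ p ∈ Set.Ioc (0:ℝ) 1, Filter.Tendsto g (nhdsWithin p (Set.Ico 0 p)) (nhds (g p))) ∧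
    Filter.Tendsto g (nhdsWithin 0 (Set.Ioc 0 1)) (nhds (g 0))

/-- The class `𝒢_ES`: profiles in `𝒢_VaR` such that `h_g(p) = (1-p)g(p)` is concave
on `(0,1)` and left-continuous at `1` (with `h_g(1) = 0` by the convention `0·∞ = 0`). -/
def GESProfile (g : ℝ → EReal) : Prop :=
  GVaRProfile g ∧ ConcaveOn ℝ (Set.Ioo (0:ℝ) 1) (fun p => (1 - p) * (g p).toReal) ∧
    Filter.Tendsto (fun p => (1 - p) * (g p).toReal) (nhdsWithin 1 (Set.Ico (0:ℝ) 1)) (nhds 0)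

section P1
variable {μ : Measure Ω}

lemma aux_ae_le [IsFiniteMeasure μ] {D E : Set Ω} (hD : MeasurableSet D) (hE : MeasurableSet E)
    (h : D ≤ᵐ[μ] E ∨ E ≤ᵐ[μ] D) (hl : μ D ≤ μ E) : D ≤ᵐ[μ] E := by
  rcases h with h | h
  · exact h
  · exact (ae_eq_of_ae_subset_of_measure_ge h hl hE.nullMeasurableSet
      (measure_ne_top μ D)).symm.le

lemma aux_iUnion_ae_le {c : ℕ → Set Ω} {D : Set Ω} (h : ∀ n, c n ≤ᵐ[μ] D) :
    (⋃ n, c n) ≤ᵐ[μ] D := by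
  filter_upwards [ae_all_iff.2 h] with ω hω
  intro hx
  obtain ⟨n, hn⟩ := mem_iUnion.1 hx
  exact hω n hn

lemma chain_sup [IsFiniteMeasure μ] (C : Set (Set Ω)) (hm : ∀ D ∈ C, MeasurableSet D)
    (htot : ∀ D ∈ C, ∀ E ∈ C, D ≤ᵐ[μ] E ∨ E ≤ᵐ[μ] D) (t : ENNReal) :
    ∃ A, MeasurableSet A ∧ μ A ≤ t ∧ ∀ D ∈ C, (μ D < t → D ≤ᵐ[μ] A) ∧ (t ≤ μ D → A ≤ᵐ[μ] D) := by
  by_cases hS : (μ '' {D | D ∈ C ∧ μ D < t}).Nonempty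
  swap
  · refine ⟨∅, MeasurableSet.empty, by simp, fun D hD => ⟨fun h => ?_, fun _ => ?_⟩⟩
    · exact absurd ⟨_, D, ⟨hD, h⟩, rfl⟩ hS
    · exact Filter.Eventually.of_forall fun ω hx => absurd hx (by exact fun h => h)
  obtain ⟨u, hmono, hlim, hu⟩ := exists_seq_tendsto_sSup hS (OrderTop.bddAbove _)
  choose c hc hcu using hu
  have hcc : ∀ i n, i ≤ n → c i ≤ᵐ[μ] c n := fun i n hin =>
    aux_ae_le (hm _ (hc i).1) (hm _ (hc n).1) (htot _ (hc i).1 _ (hc n).1)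
      (by rw [hcu, hcu]; exact hmono hin)
  refine ⟨⋃ n, c n, MeasurableSet.iUnion fun n => hm _ (hc n).1, ?_, fun D hD => ⟨fun h => ?_, fun h => ?_⟩⟩
  · rw [measure_iUnion_eq_iSup_accumulate]
    refine iSup_le fun n => ?_
    refine le_trans (measure_mono_ae (μ := μ) (t := c n) ?_) (hc n).2.le
    filter_upwards [ae_all_iff.2 fun i => ae_all_iff.2 fun (hi : i ≤ n) => hcc i n hi] with ω hω
    intro hx
    obtain ⟨i, hi, hx⟩ := mem_accumulate.1 hx
    exact hω i hi hx
  · have hsub : ∀ n, c n ⊆ ⋃ n, c n := subset_iUnion c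
    by_cases hn : ∃ n, μ D ≤ μ (c n)
    · obtain ⟨n, hn⟩ := hn
      exact (aux_ae_le (hm _ hD) (hm _ (hc n).1) (htot _ hD _ (hc n).1) hn).trans
        (hsub n).eventuallyLE
    · push Not at hn
      refine aux_ae_le (hm _ hD) (MeasurableSet.iUnion fun n => hm _ (hc n).1)
        (Or.inr (aux_iUnion_ae_le fun n => aux_ae_le (hm _ (hc n).1) (hm _ hD)
          (htot _ (hc n).1 _ hD) (hn n).le)) ?_
      refine (le_sSup (s := μ '' {D | D ∈ C ∧ μ D < t}) ⟨D, ⟨hD, h⟩, rfl⟩).trans ?_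
      refine le_of_tendsto hlim (Eventually.of_forall fun n => ?_)
      rw [← hcu]
      exact measure_mono (hsub n)
  · exact aux_iUnion_ae_le fun n => aux_ae_le (hm _ (hc n).1) (hm _ hD)
          (htot _ (hc n).1 _ hD) ((hc n).2.le.trans h)

lemma exists_chain [IsProbabilityMeasure μ] (hat : Atomless μ) :
    ∃ C : Set (Set Ω), (∀ D ∈ C, MeasurableSet D) ∧
      (∀ D ∈ C, ∀ E ∈ C, D ≤ᵐ[μ] E ∨ E ≤ᵐ[μ] D) ∧ ∀ t ≤ (1 : ENNReal), ∃ D ∈ C, μ D = t := by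
  let r : {s : Set Ω // MeasurableSet s} → {s : Set Ω // MeasurableSet s} → Prop :=
    fun s t => s.1 ≤ᵐ[μ] t.1
  have hmax := maxChain_spec (r := r)
  set C0 := maxChain r
  let C : Set (Set Ω) := Subtype.val '' C0
  have hm : ∀ D ∈ C, MeasurableSet D := by
    rintro _ ⟨D, _, rfl⟩; exact D.2
  have htot : ∀ D ∈ C, ∀ E ∈ C, D ≤ᵐ[μ] E ∨ E ≤ᵐ[μ] D := by
    rintro _ ⟨D, hD, rfl⟩ _ ⟨E, hE, rfl⟩
    by_cases h : D = E
    · subst h; exact Or.inl (EventuallyLE.refl _ _)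
    · exact hmax.1 hD hE h
  have hins : ∀ E, MeasurableSet E → (∀ D ∈ C, D ≤ᵐ[μ] E ∨ E ≤ᵐ[μ] D) → E ∈ C := by
    intro E hE h
    have hch : IsChain r (insert ⟨E, hE⟩ C0) :=
      hmax.1.insert fun b hb _ => (h b.1 ⟨b, hb, rfl⟩).symm
    have := hmax.2 hch (subset_insert _ _)
    exact ⟨⟨E, hE⟩, by rw [this]; exact mem_insert _ _, rfl⟩
  refine ⟨C, hm, htot, fun t ht => ?_⟩
  by_contra hno
  push Not at hno
  obtain ⟨A, hA, hAt, hAC⟩ := chain_sup C hm htot t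
  obtain ⟨B', hB', hBt, hBC⟩ := chain_sup (μ := μ) (compl '' C)
    (by rintro _ ⟨D, hD, rfl⟩; exact (hm D hD).compl)
    (by
      rintro _ ⟨D, hD, rfl⟩ _ ⟨E, hE, rfl⟩
      rcases htot D hD E hE with h | h
      · exact Or.inr h.compl
      · exact Or.inl h.compl) (1 - t)
  have htop : t ≠ ⊤ := ne_top_of_le_ne_top ENNReal.one_ne_top ht
  have hBt' : t ≤ μ B'ᶜ := by
    rw [prob_compl_eq_one_sub hB']
    calc t = 1 - (1 - t) := (ENNReal.sub_sub_cancel ENNReal.one_ne_top ht).symm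
      _ ≤ 1 - μ B' := tsub_le_tsub_left hBt 1
  have hBC' : ∀ D ∈ C, t ≤ μ D → B'ᶜ ≤ᵐ[μ] D := by
    intro D hD hDt
    have hlt : t < μ D := lt_of_le_of_ne hDt (hno D hD).symm
    have : Dᶜ ≤ᵐ[μ] B' := by
      refine (hBC _ ⟨D, hD, rfl⟩).1 ?_
      rw [prob_compl_eq_one_sub (hm D hD)]
      exact ENNReal.sub_lt_of_sub_lt prob_le_one (Or.inl ENNReal.one_ne_top)
        (by rwa [ENNReal.sub_sub_cancel ENNReal.one_ne_top ht])
    filter_upwards [this] with ω h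
    intro hx
    by_contra hn
    exact hx (h hn)
  set B := A ∪ B'ᶜ
  have hB : MeasurableSet B := hA.union hB'.compl
  have hAB : A ⊆ B := subset_union_left
  have hBD : ∀ D ∈ C, t ≤ μ D → B ≤ᵐ[μ] D := by
    intro D hD hDt
    filter_upwards [(hAC D hD).2 hDt, hBC' D hD hDt] with ω h1 h2
    rintro (h | h)
    · exact h1 h
    · exact h2 h
  have hmid : ∀ E, MeasurableSet E → A ⊆ E → E ⊆ B → E ∈ C := by
    intro E hE hAE hEB
    refine hins E hE fun D hD => ?_
    rcases lt_or_ge (μ D) t with h | h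
    · exact Or.inl (((hAC D hD).1 h).trans hAE.eventuallyLE)
    · exact Or.inr (hEB.eventuallyLE.trans (hBD D hD h))
  have hAt' : μ A < t := lt_of_le_of_ne hAt (hno A (hmid A hA le_rfl hAB))
  have hBt'' : t < μ B := lt_of_le_of_ne (hBt'.trans (measure_mono subset_union_right))
    (hno B (hmid B hB hAB le_rfl)).symm
  have hd : μ (B \ A) = μ B - μ A := measure_sdiff hAB hA.nullMeasurableSet (measure_ne_top _ _)
  obtain ⟨F, hF, hFs, hF0, hF1⟩ := hat (B \ A) (hB.diff hA)
    (by rw [hd]; exact tsub_pos_of_lt (hAt'.trans hBt''))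
  have hE : A ∪ F ∈ C := hmid _ (hA.union hF) subset_union_left
    (union_subset hAB (hFs.trans sdiff_subset))
  have hdis : Disjoint A F := (disjoint_sdiff_right (s := A) (t := B)).mono_right hFs
  have hEm : μ (A ∪ F) = μ A + μ F := measure_union hdis hF
  rcases lt_or_ge (μ (A ∪ F)) t with h | h
  · have h1 := measure_mono_ae ((hAC _ hE).1 h)
    rw [hEm] at h1
    exact absurd h1 (not_le.2 (ENNReal.lt_add_right (measure_ne_top _ _) hF0.ne'))
  · have h1 := measure_mono_ae (hBD _ hE h)
    rw [hEm] at h1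
    have h2 : μ B = μ A + μ (B \ A) := by rw [hd, add_tsub_cancel_of_le (measure_mono hAB)]
    rw [h2] at h1
    exact absurd h1 (not_le.2 (ENNReal.add_lt_add_left (measure_ne_top _ _) hF1))

lemma exists_uniform [IsProbabilityMeasure μ] (hat : Atomless μ) :
    ∃ U : Ω → ℝ, Measurable U ∧ μ.map U = volume.restrict (Ioo (0:ℝ) 1) := by
  classical
  obtain ⟨C, hm, htot, hex⟩ := exists_chain hat
  have hex' : ∀ q : ℚ, ∃ D ∈ C, μ D = min (ENNReal.ofReal q) 1 := fun q => hex _ (min_le_right _ _)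
  choose A hAC hAμ using hex'
  -- truncated index: use only rationals in (0,1), default value 1
  let f : ℚ → Ω → ℝ := fun q ω => if ω ∈ A q ∧ 0 < q ∧ q < 1 then (q : ℝ) else 1
  have hfm : ∀ q, Measurable (f q) := by
    intro q
    refine Measurable.ite ?_ measurable_const measurable_const
    by_cases h : 0 < q ∧ q < 1
    · simp only [h, and_true]; exact hm _ (hAC q)
    · simp only [h, and_false]; simp
  have hf0 : ∀ q ω, 0 ≤ f q ω := by
    intro q ω
    simp only [f]
    split_ifs with h
    · exact_mod_cast h.2.1.le
    · exact zero_le_one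
  have hbdd : ∀ ω, BddBelow (range fun q => f q ω) := fun ω => ⟨0, by rintro _ ⟨q, rfl⟩; exact hf0 q ω⟩
  let U : Ω → ℝ := fun ω => ⨅ q, f q ω
  have hU : Measurable U := Measurable.iInf hfm
  have hU0 : ∀ ω, 0 ≤ U ω := fun ω => le_ciInf fun q => hf0 q ω
  have hU1 : ∀ ω, U ω ≤ 1 := fun ω => (ciInf_le (hbdd ω) 0).trans (by simp [f])
  have hlt : ∀ x : ℝ, x ≤ 1 → U ⁻¹' Iio x = ⋃ q : {q : ℚ // 0 < q ∧ (q : ℝ) < x}, A q.1 := by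
    intro x hx
    ext ω
    simp only [mem_preimage, mem_Iio, mem_iUnion, U]
    rw [ciInf_lt_iff (hbdd ω)]
    constructor
    · rintro ⟨q, hq⟩
      simp only [f] at hq
      split_ifs at hq with h
      · exact ⟨⟨q, h.2.1, hq⟩, h.1⟩
      · linarith
    · rintro ⟨⟨q, hq0, hqx⟩, hq⟩
      refine ⟨q, ?_⟩
      simp only [f]
      have : q < 1 := by exact_mod_cast hqx.trans_le hx
      rw [if_pos ⟨hq, hq0, this⟩]; exact hqx
  have hμlt : ∀ x : ℝ, 0 ≤ x → x ≤ 1 → μ (U ⁻¹' Iio x) = ENNReal.ofReal x := by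
    intro x hx0 hx
    apply le_antisymm
    · obtain ⟨D, hD, hDμ⟩ := hex (ENNReal.ofReal x) (by simpa using hx)
      rw [← hDμ]
      refine measure_mono_ae ?_
      rw [hlt x hx]
      have : ∀ q : {q : ℚ // 0 < q ∧ (q : ℝ) < x}, A q.1 ≤ᵐ[μ] D := by
        rintro ⟨q, hq0, hqx⟩
        refine aux_ae_le (hm _ (hAC _)) (hm _ hD) (htot _ (hAC _) _ hD) ?_
        rw [hAμ, hDμ]
        exact (min_le_left _ _).trans (ENNReal.ofReal_le_ofReal hqx.le)
      filter_upwards [ae_all_iff.2 this] with ω hω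
      intro h
      obtain ⟨q, hq⟩ := mem_iUnion.1 h
      exact hω q hq
    · refine le_of_forall_lt fun c hc => ?_
      have hcf : c ≠ ⊤ := ne_top_of_lt hc
      have hc' : c.toReal < x := by
        rwa [← ENNReal.lt_ofReal_iff_toReal_lt hcf]
      obtain ⟨q, hq1, hq2⟩ := exists_rat_btwn hc'
      have hq0 : (0:ℝ) < q := ENNReal.toReal_nonneg.trans_lt hq1
      have : μ (A q) = ENNReal.ofReal q := by
        rw [hAμ, min_eq_left]
        simpa using (hq2.le.trans hx)
      calc c < ENNReal.ofReal q := by rwa [ENNReal.lt_ofReal_iff_toReal_lt hcf]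
        _ = μ (A q) := this.symm
        _ ≤ _ := by
          rw [hlt x hx]
          exact measure_mono (subset_iUnion (fun q : {q : ℚ // 0 < q ∧ (q : ℝ) < x} => A q.1)
            ⟨q, by exact_mod_cast hq0, hq2⟩)
  refine ⟨U, hU, ?_⟩
  have : IsProbabilityMeasure (μ.map U) := Measure.isProbabilityMeasure_map hU.aemeasurable
  have : IsProbabilityMeasure (volume.restrict (Ioo (0:ℝ) 1)) := ⟨by simp⟩
  refine Measure.ext_of_Ici _ _ fun x => ?_
  have hc : (Ici x) = (Iio x)ᶜ := by simp
  rw [hc, prob_compl_eq_one_sub measurableSet_Iio, prob_compl_eq_one_sub measurableSet_Iio]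
  congr 1
  rw [Measure.map_apply hU measurableSet_Iio, Measure.restrict_apply measurableSet_Iio]
  rcases lt_or_ge x 0 with hx | hx
  · have h1 : U ⁻¹' Iio x = ∅ := by
      ext ω; simp; linarith [hU0 ω]
    have h2 : Iio x ∩ Ioo (0:ℝ) 1 = ∅ := by
      ext y; simp; intros; linarith
    rw [h1, h2]; simp
  rcases le_or_gt x 1 with hx1 | hx1
  · rw [hμlt x hx hx1]
    have h2 : Iio x ∩ Ioo (0:ℝ) 1 = Ioo 0 x := by
      ext y; simp; constructor
      · rintro ⟨a, b, c⟩; exact ⟨b, a⟩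
      · rintro ⟨a, b⟩; exact ⟨b, a, by linarith⟩
    rw [h2]; simp
  · have h1 : U ⁻¹' Iio x = univ := by
      ext ω; simp; linarith [hU1 ω]
    have h2 : Iio x ∩ Ioo (0:ℝ) 1 = Ioo 0 1 := by
      ext y; simp; intros; linarith
    rw [h1, h2]; simp
end P1
section P2
open ProbabilityTheory
variable {μ : Measure Ω}

lemma meas_le_eq [IsProbabilityMeasure μ] {Z : Ω → ℝ} (hZ : AEMeasurable Z μ) (x : ℝ) :
    μ {ω | Z ω ≤ x} = ENNReal.ofReal (cdf (μ.map Z) x) := by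
  have : IsProbabilityMeasure (μ.map Z) := Measure.isProbabilityMeasure_map hZ
  rw [ofReal_cdf, Measure.map_apply_of_aemeasurable hZ measurableSet_Iic]
  rfl

lemma VaRr_le_iff [IsProbabilityMeasure μ] {Z : Ω → ℝ} (hZ : AEMeasurable Z μ) {t : ℝ}
    (ht : t ∈ Ioo (0:ℝ) 1) (x : ℝ) :
    VaRr μ Z t ≤ x ↔ t ≤ cdf (μ.map Z) x := by
  set F := cdf (μ.map Z)
  have hS : {x : ℝ | ENNReal.ofReal t ≤ μ {ω | Z ω ≤ x}} = {x | t ≤ F x} := by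
    ext y
    simp only [mem_ofPred_eq]
    rw [meas_le_eq hZ, ENNReal.ofReal_le_ofReal_iff (cdf_nonneg _ _)]
  have hne : {x | t ≤ F x}.Nonempty := by
    obtain ⟨y, hy⟩ := ((tendsto_cdf_atTop (μ.map Z)).eventually (lt_mem_nhds ht.2)).exists
    exact ⟨y, hy.le⟩
  have hbd : BddBelow {x | t ≤ F x} := by
    obtain ⟨y, hy⟩ := ((tendsto_cdf_atBot (μ.map Z)).eventually (gt_mem_nhds ht.1)).exists
    refine ⟨y, fun z hz => ?_⟩
    by_contra hlt
    push Not at hlt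
    have := monotone_cdf (μ.map Z) hlt.le
    exact absurd (hz.trans this) (not_le.2 hy)
  unfold VaRr
  rw [hS]
  constructor
  · intro h
    have hy : ∀ y > x, t ≤ F y := by
      intro y hy
      obtain ⟨s, hs, hsy⟩ := exists_lt_of_csInf_lt hne (h.trans_lt hy)
      exact le_trans hs (monotone_cdf (μ.map Z) hsy.le)
    have hc : Tendsto F (nhdsWithin x (Ioi x)) (nhds (F x)) :=
      (F.right_continuous x).mono Ioi_subset_Ici_self
    exact ge_of_tendsto hc (eventually_nhdsWithin_of_forall hy)
  · intro h
    exact csInf_le hbd h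

lemma VaRr_mono [IsProbabilityMeasure μ] {Z : Ω → ℝ} (hZ : AEMeasurable Z μ) :
    MonotoneOn (VaRr μ Z) (Ioo 0 1) := by
  intro s hs t ht hst
  rw [VaRr_le_iff hZ hs]
  exact hst.trans ((VaRr_le_iff hZ ht _).1 le_rfl)

lemma VaRr_aemeas [IsProbabilityMeasure μ] {Z : Ω → ℝ} (hZ : AEMeasurable Z μ) :
    AEMeasurable (VaRr μ Z) (volume.restrict (Ioo 0 1)) :=
  aemeasurable_restrict_of_monotoneOn measurableSet_Ioo (VaRr_mono hZ)

lemma VaRr_map [IsProbabilityMeasure μ] {Z : Ω → ℝ} (hZ : AEMeasurable Z μ) :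
    (volume.restrict (Ioo 0 1)).map (VaRr μ Z) = μ.map Z := by
  have : IsProbabilityMeasure (μ.map Z) := Measure.isProbabilityMeasure_map hZ
  have : IsProbabilityMeasure (volume.restrict (Ioo (0:ℝ) 1)) := ⟨by simp⟩
  have := Measure.isProbabilityMeasure_map (VaRr_aemeas hZ)
  refine Measure.ext_of_Iic _ _ fun x => ?_
  rw [Measure.map_apply_of_aemeasurable (VaRr_aemeas hZ) measurableSet_Iic,
    Measure.restrict_apply' measurableSet_Ioo, ← ofReal_cdf]
  have h0 := cdf_nonneg (μ.map Z) x
  have h1 := cdf_le_one (μ.map Z) x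
  have hset : VaRr μ Z ⁻¹' Iic x ∩ Ioo 0 1 = Iic (cdf (μ.map Z) x) ∩ Ioo 0 1 := by
    ext t
    simp only [mem_inter_iff, mem_preimage, mem_Iic]
    constructor
    · rintro ⟨a, b⟩; exact ⟨(VaRr_le_iff hZ b x).1 a, b⟩
    · rintro ⟨a, b⟩; exact ⟨(VaRr_le_iff hZ b x).2 a, b⟩
  rw [hset]
  apply le_antisymm
  · calc _ ≤ volume (Ioc 0 (cdf (μ.map Z) x)) := measure_mono (by
          rintro t ⟨a, b⟩; exact ⟨b.1, a⟩)
      _ = _ := by simp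
  · calc ENNReal.ofReal (cdf (μ.map Z) x) = volume (Ioo 0 (cdf (μ.map Z) x)) := by simp
      _ ≤ _ := measure_mono (by
          rintro t ⟨a, b⟩; exact ⟨b.le, a, b.trans_le h1⟩)

lemma VaRr_integrable [IsProbabilityMeasure μ] {Z : Ω → ℝ} (hZ : Integrable Z μ) :
    IntegrableOn (VaRr μ Z) (Ioo 0 1) := by
  have h1 : Integrable (id : ℝ → ℝ) (μ.map Z) :=
    (integrable_map_measure (by fun_prop) hZ.aemeasurable).2 hZ
  rw [← VaRr_map hZ.aemeasurable] at h1
  exact (integrable_map_measure (by fun_prop) (VaRr_aemeas hZ.aemeasurable)).1 h1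

lemma VaRr_comp [IsProbabilityMeasure μ] {U : Ω → ℝ} (hU : Measurable U)
    (hUm : μ.map U = volume.restrict (Ioo (0:ℝ) 1)) {q : ℝ → ℝ} (hq : MonotoneOn q (Ioo 0 1)) :
    AEMeasurable (q ∘ U) μ ∧ VaRr μ (q ∘ U) =ᵐ[volume.restrict (Ioo 0 1)] q := by
  have hqm : AEMeasurable q (volume.restrict (Ioo 0 1)) :=
    aemeasurable_restrict_of_monotoneOn measurableSet_Ioo hq
  have hqm' : AEMeasurable q (μ.map U) := by rwa [hUm]
  have hZ : AEMeasurable (q ∘ U) μ := hqm'.comp_measurable hU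
  refine ⟨hZ, ?_⟩
  have : IsProbabilityMeasure (μ.map (q ∘ U)) := Measure.isProbabilityMeasure_map hZ
  have hF : ∀ x, ENNReal.ofReal (cdf (μ.map (q ∘ U)) x) = volume (q ⁻¹' Iic x ∩ Ioo 0 1) := by
    intro x
    rw [ofReal_cdf, ← AEMeasurable.map_map_of_aemeasurable hqm' hU.aemeasurable, hUm,
      Measure.map_apply_of_aemeasurable hqm measurableSet_Iic,
      Measure.restrict_apply' measurableSet_Ioo]
  have hub : ∀ t ∈ Ioo (0:ℝ) 1, VaRr μ (q ∘ U) t ≤ q t := by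
    intro t ht
    rw [VaRr_le_iff hZ ht, ← ENNReal.ofReal_le_ofReal_iff (cdf_nonneg _ _), hF]
    calc ENNReal.ofReal t = volume (Ioc 0 t) := by simp
      _ ≤ _ := measure_mono (by
        rintro s ⟨a, b⟩
        have hs : s ∈ Ioo (0:ℝ) 1 := ⟨a, b.trans_lt ht.2⟩
        exact ⟨hq hs ht b, hs⟩)
  have hlb : ∀ t ∈ Ioo (0:ℝ) 1, ∀ s ∈ Ioo 0 t, q s ≤ VaRr μ (q ∘ U) t := by
    intro t ht s hs
    by_contra hlt
    push Not at hlt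
    have h1 := (VaRr_le_iff hZ ht _).1 le_rfl
    rw [← ENNReal.ofReal_le_ofReal_iff (cdf_nonneg _ _), hF] at h1
    have h2 : volume (q ⁻¹' Iic (VaRr μ (q ∘ U) t) ∩ Ioo 0 1) ≤ volume (Ioo 0 s) := by
      refine measure_mono ?_
      rintro r ⟨a, b⟩
      refine ⟨b.1, ?_⟩
      by_contra hsr
      push Not at hsr
      have := hq ⟨hs.1, hs.2.trans ht.2⟩ b hsr
      exact absurd (this.trans a) (not_le.2 hlt)
    have h3 := h1.trans h2
    rw [Real.volume_Ioo, sub_zero, ENNReal.ofReal_le_ofReal_iff hs.1.le] at h3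
    exact absurd h3 (not_le.2 hs.2)
  have hcount := hq.countable_not_continuousWithinAt
  have hae : ∀ᵐ t ∂(volume.restrict (Ioo (0:ℝ) 1)),
      t ∉ {x | x ∈ Ioo (0:ℝ) 1 ∧ ¬ContinuousWithinAt q (Ioo 0 1) x} :=
    ae_restrict_of_ae (hcount.ae_notMem volume)
  filter_upwards [hae, ae_restrict_mem measurableSet_Ioo] with t ht1 ht
  have hc : ContinuousWithinAt q (Ioo 0 1) t := by
    by_contra hn; exact ht1 ⟨ht, hn⟩
  refine le_antisymm (hub t ht) ?_
  have hc' : Tendsto q (nhdsWithin t (Ioo 0 t)) (nhds (q t)) :=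
    hc.mono (Ioo_subset_Ioo_right ht.2.le)
  have : (nhdsWithin t (Ioo 0 t)).NeBot := right_nhdsWithin_Ioo_neBot ht.1
  exact le_of_tendsto hc' (eventually_nhdsWithin_of_forall (hlb t ht))

lemma ES_tendsto [IsProbabilityMeasure μ] {Z : Ω → ℝ} (hZi : Integrable Z μ) :
    Tendsto (ES μ Z) (nhdsWithin 1 (Ico 0 1)) (nhds (ES μ Z 1)) := by
  have hZ := hZi.aemeasurable
  have hint := VaRr_integrable hZi
  have hES : ∀ p ∈ Ico (0:ℝ) 1, ES μ Z p =
      (((1 - p)⁻¹ * ∫ q in Set.Ioo p 1, VaRr μ Z q : ℝ) : EReal) := by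
    intro p hp
    simp [ES, hp.2.ne]
  have hES1 : ES μ Z 1 = essSup (fun ω => (Z ω : EReal)) μ := by simp [ES]
  have hconst : ∀ p ∈ Ico (0:ℝ) 1, ∀ M : ℝ, (1 - p)⁻¹ * ∫ q in Set.Ioo p 1, M = M := by
    intro p hp M
    have : (1 - p) ≠ 0 := by linarith [hp.2]
    simp [max_eq_left (by linarith [hp.2] : (0:ℝ) ≤ 1 - p)]
    field_simp
  have hinv : ∀ p ∈ Ico (0:ℝ) 1, 0 ≤ (1 - p)⁻¹ := fun p hp =>
    inv_nonneg.2 (by linarith [hp.2])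
  have hon : ∀ p ∈ Ico (0:ℝ) 1, IntegrableOn (VaRr μ Z) (Ioo p 1) := fun p hp =>
    hint.mono_set (Ioo_subset_Ioo_left hp.1)
  have hub : ∀ p ∈ Ico (0:ℝ) 1, ES μ Z p ≤ ES μ Z 1 := by
    intro p hp
    rw [hES p hp, hES1]
    have hle := ae_le_essSup (f := fun ω => (Z ω : EReal)) (μ := μ)
    set s := essSup (fun ω => (Z ω : EReal)) μ
    induction hs : s using EReal.rec with
    | bot =>
      exfalso
      obtain ⟨ω, hω⟩ := hle.exists
      rw [hs] at hω
      simp at hω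
    | top => exact le_top
    | coe M =>
      have hF : cdf (μ.map Z) M = 1 := by
        have : μ {ω | Z ω ≤ M} = 1 := by
          rw [← mem_ae_iff_prob_eq_one₀]
          · filter_upwards [hle] with ω hω
            rw [hs] at hω
            exact EReal.coe_le_coe_iff.1 hω
          · exact nullMeasurableSet_le hZ aemeasurable_const
        rw [meas_le_eq hZ] at this
        exact ENNReal.ofReal_eq_one.1 this
      rw [EReal.coe_le_coe_iff]
      conv_rhs => rw [← hconst p hp M]
      refine mul_le_mul_of_nonneg_left ?_ (hinv p hp)
      refine setIntegral_mono_on (hon p hp) (by simp) measurableSet_Ioo fun t ht => ?_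
      rw [VaRr_le_iff hZ ⟨hp.1.trans_lt ht.1, ht.2⟩, hF]
      exact ht.2.le
  have hlb : ∀ c < ES μ Z 1, ∀ᶠ p in nhdsWithin (1:ℝ) (Ico 0 1), c < ES μ Z p := by
    intro c hc
    obtain ⟨x, hcx, hx⟩ := EReal.exists_between_coe_real hc
    have hF : cdf (μ.map Z) x < 1 := by
      refine lt_of_le_of_ne (cdf_le_one _ _) fun h => ?_
      have h1 := meas_le_eq hZ x
      rw [h, ENNReal.ofReal_one, ← mem_ae_iff_prob_eq_one₀ (nullMeasurableSet_le hZ aemeasurable_const)] at h1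
      rw [hES1] at hx
      refine absurd hx (not_lt.2 ?_)
      refine essSup_le_of_ae_le _ ?_
      filter_upwards [h1] with ω hω
      exact EReal.coe_le_coe_iff.2 hω
    filter_upwards [self_mem_nhdsWithin, mem_nhdsWithin_of_mem_nhds (lt_mem_nhds hF)] with p hp hpF
    refine hcx.trans_le ?_
    rw [hES p hp, EReal.coe_le_coe_iff]
    conv_lhs => rw [← hconst p hp x]
    refine mul_le_mul_of_nonneg_left ?_ (hinv p hp)
    refine setIntegral_mono_on (by simp) (hon p hp) measurableSet_Ioo fun t ht => ?_
    by_contra hlt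
    push Not at hlt
    have := (VaRr_le_iff hZ ⟨hp.1.trans_lt ht.1, ht.2⟩ x).1 hlt.le
    have h3 : cdf (μ.map Z) x < p := hpF
    linarith [ht.1]
  refine tendsto_order.2 ⟨hlb, fun c hc => ?_⟩
  exact eventually_nhdsWithin_of_forall fun p hp => (hub p hp).trans_lt hc
end P2
lemma exists_q {H : ℝ → ℝ} (hconc : ConcaveOn ℝ (Ioo (0:ℝ) 1) H)
    (hcont : ContinuousOn H (Icc 0 1)) (hH1 : H 1 = 0) :
    ∃ q : ℝ → ℝ, MonotoneOn q (Ioo 0 1) ∧ IntegrableOn q (Ioo 0 1) ∧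
      ∀ p ∈ Icc (0:ℝ) 1, ∫ t in Ioo p 1, q t = H p := by
  have hconv : ConvexOn ℝ (Ioo (0:ℝ) 1) (-H) := hconc.neg
  let q : ℝ → ℝ := fun x => derivWithin (-H) (Ioi x) x
  have hmono : MonotoneOn q (Ioo 0 1) := by
    have := hconv.monotoneOn_rightDeriv
    rwa [interior_Ioo] at this
  have hd : ∀ x ∈ Ioo (0:ℝ) 1, HasDerivWithinAt (-H) (q x) (Ioi x) x := fun x hx =>
    hconv.hasDerivWithinAt_rightDeriv_of_mem_interior (by rwa [interior_Ioo])
  have hcn : ContinuousOn (-H) (Icc 0 1) := hcont.neg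
  have hhalf : (1/2:ℝ) ∈ Ioo (0:ℝ) 1 := by constructor <;> norm_num
  have hI2 : IntegrableOn q (Ioc (1/2) 1) := by
    have h := intervalIntegral.integrableOn_deriv_right_of_nonneg (a := 1/2) (b := 1)
      (g := fun x => (-H) x - q (1/2) * x) (g' := fun x => q x - q (1/2)) ?_ ?_ ?_
    · have h2 := h.add (integrableOn_const (C := q (1/2)) (by simp) (by simp))
      refine h2.congr_fun (fun x _ => by simp) measurableSet_Ioc
    · exact (hcn.mono (Icc_subset_Icc_left (by norm_num))).sub (by fun_prop)
    · intro x hx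
      have h1 := (hd x ⟨by linarith [hx.1], hx.2⟩).sub
        (((hasDerivAt_id x).const_mul (q (1/2))).hasDerivWithinAt)
      rw [mul_one] at h1
      exact h1
    · intro x hx
      exact sub_nonneg.2 (hmono hhalf ⟨by linarith [hx.1], hx.2⟩ hx.1.le)
  have hI1 : IntegrableOn q (Ioc 0 (1/2)) := by
    have h := intervalIntegral.integrableOn_deriv_right_of_nonneg (a := 0) (b := 1/2)
      (g := fun x => q (1/2) * x - (-H) x) (g' := fun x => q (1/2) - q x) ?_ ?_ ?_
    · have h2 := (integrableOn_const (C := q (1/2)) (s := Ioc (0:ℝ) (1/2)) (μ := volume)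
        (by simp) (by simp)).sub h
      refine h2.congr_fun (fun x _ => by simp) measurableSet_Ioc
    · exact ContinuousOn.sub (by fun_prop) (hcn.mono (Icc_subset_Icc_right (by norm_num)))
    · intro x hx
      have h1 := (((hasDerivAt_id x).const_mul (q (1/2))).hasDerivWithinAt).sub
        (hd x ⟨hx.1, by linarith [hx.2]⟩)
      rw [mul_one] at h1
      exact h1
    · intro x hx
      exact sub_nonneg.2 (hmono ⟨hx.1, by linarith [hx.2]⟩ hhalf hx.2.le)
  have hI : IntegrableOn q (Ioc 0 1) := by
    have := hI1.union hI2
    rwa [Ioc_union_Ioc_eq_Ioc (by norm_num) (by norm_num)] at this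
  refine ⟨q, hmono, hI.mono_set Ioo_subset_Ioc_self, fun p hp => ?_⟩
  rw [← integral_Ioc_eq_integral_Ioo, ← intervalIntegral.integral_of_le hp.2]
  rw [intervalIntegral.integral_eq_sub_of_hasDeriv_right_of_le (f := -H) hp.2
    (hcn.mono (Icc_subset_Icc_left hp.1)) (fun x hx => hd x ⟨hp.1.trans_lt hx.1, hx.2⟩)]
  · simp [hH1]
  · rw [intervalIntegrable_iff_integrableOn_Ioc_of_le hp.2]
    exact hI.mono_set (Ioc_subset_Ioc_left hp.1)

lemma stmt14_fwd (μ : Measure Ω) [IsProbabilityMeasure μ] (hatomless : Atomless μ)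
    (g : ℝ → EReal) (h : GESProfile g) :
    ∃ Z : Ω → ℝ, Integrable Z μ ∧ ∀ p ∈ Set.Icc (0:ℝ) 1, ES μ Z p = g p := by
  obtain ⟨⟨⟨hmono, hbot, -⟩, hfin, hleft, hright⟩, hconc, hlim1⟩ := h
  set H : ℝ → ℝ := fun p => (1 - p) * (g p).toReal with hH
  have hH1 : H 1 = 0 := by simp [hH]
  have hcont : ContinuousOn H (Icc 0 1) := by
    intro x hx
    rcases eq_or_lt_of_le hx.1 with h0 | h0
    · subst h0
      have h1 : Tendsto (fun p => (g p).toReal) (nhdsWithin 0 (Ioc 0 1)) (nhds (g 0).toReal) :=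
        (EReal.tendsto_toReal (hfin 0 ⟨le_rfl, one_pos⟩) (hbot 0 hx)).comp hright
      have h2 : Tendsto (fun p : ℝ => 1 - p) (nhdsWithin 0 (Ioc 0 1)) (nhds (1 - 0)) :=
        (Continuous.tendsto (by fun_prop) 0).mono_left nhdsWithin_le_nhds
      have h3 : ContinuousWithinAt H (Ioc 0 1) 0 := h2.mul h1
      have := h3.insert
      rwa [Ioc_insert_left zero_le_one] at this
    rcases eq_or_lt_of_le hx.2 with h1 | h1
    · subst h1
      have h3 : ContinuousWithinAt H (Ico 0 1) 1 := by
        rw [ContinuousWithinAt, hH1]; exact hlim1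
      have := h3.insert
      rwa [Ico_insert_right zero_le_one] at this
    · exact ((hconc.continuousOn isOpen_Ioo).continuousAt
        (isOpen_Ioo.mem_nhds ⟨h0, h1⟩)).continuousWithinAt
  obtain ⟨q, hq, hqi, hqH⟩ := exists_q hconc hcont hH1
  obtain ⟨U, hU, hUm⟩ := exists_uniform hatomless
  obtain ⟨hZm, hZq⟩ := VaRr_comp hU hUm hq
  have hZ : Integrable (q ∘ U) μ := by
    have : Integrable q (μ.map U) := by rw [hUm]; exact hqi
    exact this.comp_measurable hU
  refine ⟨q ∘ U, hZ, ?_⟩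
  have hlt : ∀ p ∈ Ico (0:ℝ) 1, ES μ (q ∘ U) p = g p := by
    intro p hp
    have hp' : p ∈ Icc (0:ℝ) 1 := ⟨hp.1, hp.2.le⟩
    have h1 : ∫ t in Ioo p 1, VaRr μ (q ∘ U) t = H p := by
      rw [← hqH p hp']
      exact integral_congr_ae (ae_restrict_of_ae_restrict_of_subset
        (Ioo_subset_Ioo_left hp.1) hZq)
    have h2 : (1 - p) ≠ 0 := by linarith [hp.2]
    simp only [ES, hp.2.ne, if_false]
    rw [h1, hH]
    simp only
    rw [inv_mul_cancel_left₀ h2]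
    exact EReal.coe_toReal (hfin p hp) (hbot p hp')
  intro p hp
  rcases lt_or_eq_of_le hp.2 with h1 | h1
  · exact hlt p ⟨hp.1, h1⟩
  · subst h1
    have : (nhdsWithin (1:ℝ) (Ico 0 1)).NeBot := right_nhdsWithin_Ico_neBot one_pos
    refine tendsto_nhds_unique (ES_tendsto hZ) ((hleft 1 ⟨one_pos, le_rfl⟩).congr' ?_)
    exact eventually_nhdsWithin_of_forall fun p hp => (hlt p hp).symm

lemma stmt14_bwd (μ : Measure Ω) [IsProbabilityMeasure μ]
    (g : ℝ → EReal) (hg : IsRiskProfile g) (Z : Ω → ℝ) (hZ : Integrable Z μ)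
    (h : ∀ p ∈ Set.Icc (0:ℝ) 1, ES μ Z p = g p) : GESProfile g := by
  have hint := VaRr_integrable hZ
  have hmono := VaRr_mono hZ.aemeasurable
  set v := VaRr μ Z with hv
  set J : ℝ → ℝ := fun p => ∫ t in p..1, v t with hJ
  have hI : IntegrableOn v (Icc 0 1) := (integrableOn_Icc_iff_integrableOn_Ioo).2 hint
  have hii : ∀ a ∈ Icc (0:ℝ) 1, ∀ b ∈ Icc (0:ℝ) 1, IntervalIntegrable v volume a b := by
    intro a ha b hb
    have h1 : IntegrableOn v (uIcc 0 1) := by rwa [uIcc_of_le zero_le_one]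
    refine (h1.mono_set ?_).intervalIntegrable
    exact uIcc_subset_uIcc (by rwa [uIcc_of_le zero_le_one]) (by rwa [uIcc_of_le zero_le_one])
  have hJc : ContinuousOn J (Icc 0 1) := by
    have := intervalIntegral.continuousOn_primitive_interval_left (f := v) (μ := volume)
      (a := 0) (b := 1) (by rwa [uIcc_of_le zero_le_one])
    rwa [uIcc_of_le zero_le_one] at this
  have hgJ : ∀ p ∈ Ico (0:ℝ) 1, g p = (((1 - p)⁻¹ * J p : ℝ) : EReal) := by
    intro p hp
    rw [← h p ⟨hp.1, hp.2.le⟩]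
    simp only [ES, hp.2.ne, if_false, hJ]
    rw [intervalIntegral.integral_of_le hp.2.le, integral_Ioc_eq_integral_Ioo]
  have hHJ : ∀ p ∈ Ico (0:ℝ) 1, (1 - p) * (g p).toReal = J p := by
    intro p hp
    have h2 : (1 - p) ≠ 0 := by linarith [hp.2]
    rw [hgJ p hp, EReal.toReal_coe, mul_inv_cancel_left₀ h2]
  have hgc : ∀ p ∈ Ico (0:ℝ) 1, Tendsto g (nhdsWithin p (Ico 0 1)) (nhds (g p)) := by
    intro p hp
    rw [hgJ p hp]
    have h2 : (1 - p) ≠ 0 := by linarith [hp.2]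
    have h1 : ContinuousWithinAt (fun p => (1 - p)⁻¹ * J p) (Ico 0 1) p :=
      ContinuousWithinAt.mul (ContinuousWithinAt.inv₀ (by fun_prop) h2)
        ((hJc p ⟨hp.1, hp.2.le⟩).mono Ico_subset_Icc_self)
    have h3 := (continuous_coe_real_ereal.tendsto _).comp h1
    refine h3.congr' ?_
    exact eventually_nhdsWithin_of_forall fun p hp => (hgJ p hp).symm
  refine ⟨⟨hg, ?_, ?_, ?_⟩, ?_, ?_⟩
  · intro p hp
    rw [hgJ p hp]
    exact EReal.coe_ne_top _
  · intro p hp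
    rcases lt_or_eq_of_le hp.2 with h1 | h1
    · exact (hgc p ⟨hp.1.le, h1⟩).mono_left (nhdsWithin_mono _ (Ico_subset_Ico_right hp.2))
    · subst h1
      rw [← h 1 ⟨zero_le_one, le_rfl⟩]
      refine (ES_tendsto hZ).congr' ?_
      exact eventually_nhdsWithin_of_forall fun p hp => h p ⟨hp.1, hp.2.le⟩
  · have h1 : nhdsWithin (0:ℝ) (Ioc 0 1) = nhdsWithin 0 (Ioo 0 1) := by
      rw [nhdsWithin_Ioc_eq_nhdsGT one_pos, nhdsWithin_Ioo_eq_nhdsGT one_pos]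
    rw [h1]
    exact (hgc 0 ⟨le_rfl, one_pos⟩).mono_left (nhdsWithin_mono _ Ioo_subset_Ico_self)
  · have hJconc : ConcaveOn ℝ (Ioo (0:ℝ) 1) J := by
      refine concaveOn_of_slope_anti_adjacent (convex_Ioo 0 1) ?_
      intro x y z hx hz hxy hyz
      have hy : y ∈ Ioo (0:ℝ) 1 := ⟨hx.1.trans hxy, hyz.trans hz.2⟩
      have i1 : (1:ℝ) ∈ Icc (0:ℝ) 1 := ⟨zero_le_one, le_rfl⟩
      have hx' := Ioo_subset_Icc_self hx
      have hy' := Ioo_subset_Icc_self hy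
      have hz' := Ioo_subset_Icc_self hz
      have e1 : (∫ t in x..y, v t) + J y = J x :=
        intervalIntegral.integral_add_adjacent_intervals (hii x hx' y hy') (hii y hy' 1 i1)
      have e2 : (∫ t in y..z, v t) + J z = J y :=
        intervalIntegral.integral_add_adjacent_intervals (hii y hy' z hz') (hii z hz' 1 i1)
      have b1 : (∫ t in x..y, v t) ≤ (y - x) * v y := by
        have := intervalIntegral.integral_mono_on hxy.le (hii x hx' y hy')
          (intervalIntegrable_const (c := v y)) (fun t ht =>
            hmono ⟨hx.1.trans_le ht.1, ht.2.trans_lt hy.2⟩ hy ht.2)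
        simpa using this
      have b2 : (z - y) * v y ≤ ∫ t in y..z, v t := by
        have := intervalIntegral.integral_mono_on hyz.le 
          (intervalIntegrable_const (c := v y)) (hii y hy' z hz') (fun t ht =>
            hmono hy ⟨hy.1.trans_le ht.1, ht.2.trans_lt hz.2⟩ ht.1)
        simpa using this
      calc (J z - J y) / (z - y) ≤ - v y := by
            rw [div_le_iff₀ (by linarith)]; nlinarith
        _ ≤ (J y - J x) / (y - x) := by
            rw [le_div_iff₀ (by linarith)]; nlinarith
    exact hJconc.congr fun p hp => (hHJ p ⟨hp.1.le, hp.2⟩).symm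
  · have h1 : Tendsto J (nhdsWithin 1 (Ico 0 1)) (nhds (J 1)) :=
      (hJc 1 ⟨zero_le_one, le_rfl⟩).mono Ico_subset_Icc_self
    have h2 : J 1 = 0 := by simp [hJ]
    rw [h2] at h1
    refine h1.congr' ?_
    exact eventually_nhdsWithin_of_forall fun p hp => (hHJ p hp).symm

/-- A risk profile `g ∈ 𝒢` belongs to `𝒢_ES` (i.e. `g ∈ 𝒢_VaR` and
`h_g(p) = (1-p)g(p)` is concave on `(0,1)` and left-continuous at `1`, with the
convention `0·∞ = 0`) iff there is `Z ∈ L¹` with `g(p) = ES_p(Z)` for all `p ∈ [0,1]`. -/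
theorem stmt14 (μ : Measure Ω) [IsProbabilityMeasure μ] (hatomless : Atomless μ)
    (g : ℝ → EReal) (hg : IsRiskProfile g) :
    GESProfile g
      ↔ ∃ Z : Ω → ℝ, Integrable Z μ ∧ ∀ p ∈ Set.Icc (0:ℝ) 1, ES μ Z p = g p := by
  constructor
  · exact stmt14_fwd μ hatomless g
  · rintro ⟨Z, hZ, h⟩
    exact stmt14_bwd μ g hg Z hZ h
end

section
/- Fix q ∈ (0,1). There exists no random variable Z, bounded from below, such that ES_q(X) = sup_{p∈[0,1]} {ES_p(X) − VaR_p(Z)} for every X ∈ L^1; in other words, the standard Expected Shortfall ES_q is not a quantile-adjusted Expected Shortfall. -/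
open MeasureTheory Set Filter

variable {Ω : Type*} [MeasurableSpace Ω]

lemma aux_small (μ : Measure Ω) [IsProbabilityMeasure μ] (h : Atomless μ) (n : ℕ) :
    ∃ A : Set Ω, MeasurableSet A ∧ 0 < μ.real A ∧ μ.real A ≤ (1/2:ℝ)^n := by
  induction n with
  | zero => exact ⟨univ, MeasurableSet.univ, by simp, by simp⟩
  | succ n ih =>
    obtain ⟨A, hA, hA0, hA1⟩ := ih
    have hA0' : 0 < μ A := by
      rw [pos_iff_ne_zero]; intro h0; simp [Measure.real, h0] at hA0
    obtain ⟨B, hB, hBA, hB0, hB1⟩ := h A hA hA0'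
    have e : μ.real (A \ B) = μ.real A - μ.real B := measureReal_sdiff hBA hB
    have b0 : 0 < μ.real B := ENNReal.toReal_pos hB0.ne' (measure_ne_top _ _)
    have b1 : μ.real B < μ.real A := 
      (ENNReal.toReal_lt_toReal (measure_ne_top _ _) (measure_ne_top _ _)).2 hB1
    rw [pow_succ]
    rcases le_total (μ.real B) (μ.real (A \ B)) with hh | hh
    · exact ⟨B, hB, b0, by linarith⟩
    · exact ⟨A \ B, hA.diff hB, by linarith, by linarith⟩

lemma aux_VaRr (μ : Measure Ω) [IsProbabilityMeasure μ] (A : Set Ω) (hA : MeasurableSet A)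
    (t : ℝ) (ht : 0 < t) (s : ℝ) (hs0 : 0 < s) (hs1 : s < 1) :
    VaRr μ (A.indicator (fun _ => t)) s = (Ioi (1 - μ.real A)).indicator (fun _ => t) s := by
  have key : ∀ x : ℝ, ENNReal.ofReal s ≤ μ {ω | A.indicator (fun _ => t) ω ≤ x} ↔
      (t ≤ x ∨ (0 ≤ x ∧ s ≤ 1 - μ.real A)) := by
    intro x
    rw [ENNReal.ofReal_le_iff_le_toReal (measure_ne_top _ _)]
    rcases le_or_gt t x with h1 | h1
    · have : {ω | A.indicator (fun _ => t) ω ≤ x} = univ := by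
        ext ω; by_cases hω : ω ∈ A <;> simp [hω] <;> linarith
      simp [this, h1, hs1.le]
    · rcases le_or_gt 0 x with h0 | h0
      · have : {ω | A.indicator (fun _ => t) ω ≤ x} = Aᶜ := by
          ext ω; by_cases hω : ω ∈ A <;> simp [hω] <;> linarith
        rw [this]
        change s ≤ μ.real Aᶜ ↔ _
        rw [probReal_compl_eq_one_sub hA]
        simp [h0, not_le.2 h1]
      · have : {ω | A.indicator (fun _ => t) ω ≤ x} = ∅ := by
          ext ω; by_cases hω : ω ∈ A <;> simp [hω] <;> linarith
        simp [this, not_le.2 h1, not_le.2 h0, hs0]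
  unfold VaRr
  simp only [key]
  by_cases hs : s ∈ Ioi (1 - μ.real A)
  · rw [indicator_of_mem hs]
    have : {x : ℝ | t ≤ x ∨ (0 ≤ x ∧ s ≤ 1 - μ.real A)} = Ici t := by
      ext x; simp only [mem_Ioi] at hs; simp [not_le.2 hs]
    rw [this, csInf_Ici]
  · rw [indicator_of_notMem hs]
    have : {x : ℝ | t ≤ x ∨ (0 ≤ x ∧ s ≤ 1 - μ.real A)} = Ici 0 := by
      ext x; simp only [mem_Ioi, not_lt] at hs
      simp only [hs, mem_ofPred_eq, mem_Ici, and_true, or_iff_right_iff_imp]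
      intro; linarith
    rw [this, csInf_Ici]

lemma aux_ES (μ : Measure Ω) [IsProbabilityMeasure μ] (A : Set Ω) (hA : MeasurableSet A)
    (t : ℝ) (ht : 0 < t) (p : ℝ) (hp0 : 0 ≤ p) (hp1 : p < 1) (hpa : p ≤ 1 - μ.real A) :
    ES μ (A.indicator (fun _ => t)) p = (((1 - p)⁻¹ * (μ.real A * t) : ℝ) : EReal) := by
  unfold ES
  rw [if_neg hp1.ne]
  congr 2
  rw [setIntegral_congr_fun (g := (Ioi (1 - μ.real A)).indicator (fun _ => t)) measurableSet_Ioo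
    (fun s hs => aux_VaRr μ A hA t ht s (hp0.trans_lt hs.1) hs.2),
    setIntegral_indicator measurableSet_Ioi]
  have : Ioo p 1 ∩ Ioi (1 - μ.real A) = Ioo (1 - μ.real A) 1 := by
    ext x; simp only [mem_inter_iff, mem_Ioo, mem_Ioi]
    constructor
    · rintro ⟨⟨_, _⟩, _⟩; constructor <;> linarith
    · rintro ⟨_, _⟩; refine ⟨⟨?_, ?_⟩, ?_⟩ <;> linarith
  rw [this]
  simp [measureReal_nonneg]

lemma aux_VaR (μ : Measure Ω) [IsProbabilityMeasure μ] (Z : Ω → ℝ) (p : ℝ) (hp0 : 0 < p)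
    (hp1 : p < 1) : ∃ x : ℝ, VaR μ Z p ≤ (x : EReal) := by
  have hmono : Monotone (fun n : ℕ => {ω | Z ω ≤ (n:ℝ)}) := by
    intro m n hmn ω hω
    have h1 : Z ω ≤ (m:ℝ) := hω
    have h2 : (m:ℝ) ≤ (n:ℝ) := by exact_mod_cast hmn
    exact (h1.trans h2 : Z ω ≤ (n:ℝ))
  have hU : (⋃ n : ℕ, {ω | Z ω ≤ (n:ℝ)}) = univ := by
    ext ω; simpa using exists_nat_ge (Z ω)
  have ht := tendsto_measure_iUnion_atTop (μ := μ) hmono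
  rw [hU, measure_univ] at ht
  have h1 : ENNReal.ofReal p < 1 := by simpa using hp1
  obtain ⟨n, hn⟩ := (ht.eventually (lt_mem_nhds h1)).exists
  refine ⟨n, ?_⟩
  unfold VaR
  rw [if_neg hp0.ne']
  exact sInf_le ⟨(n:ℝ), hn.le, rfl⟩

/-- For `q ∈ (0,1)`, the standard Expected Shortfall `ES_q` is not
a quantile-adjusted Expected Shortfall: there is no random variable `Z` bounded from
below with `ES_q(X) = sup_{p ∈ [0,1]} (ES_p(X) - VaR_p(Z))` for every `X ∈ L¹`. -/
theorem stmt16 (μ : Measure Ω) [IsProbabilityMeasure μ] (hatomless : Atomless μ)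
    (q : ℝ) (hq : q ∈ Set.Ioo (0:ℝ) 1) :
    ¬ ∃ Z : Ω → ℝ, Measurable Z ∧ (∃ c : ℝ, ∀ ω, c ≤ Z ω) ∧
        ∀ X : Ω → ℝ, Integrable X μ →
          ES μ X q = ⨆ p ∈ Set.Icc (0:ℝ) 1, (ES μ X p - VaR μ Z p) := by
  rintro ⟨Z, -, -, h⟩
  obtain ⟨hq0, hq1⟩ := hq
  obtain ⟨n, hn⟩ := exists_pow_lt_of_lt_one (sub_pos.2 hq1) (by norm_num : (1/2:ℝ) < 1)
  obtain ⟨A, hA, hA0, hA1⟩ := aux_small μ hatomless n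
  set a := μ.real A with ha
  have haq : a < 1 - q := hA1.trans_lt hn
  obtain ⟨x, hx⟩ := aux_VaR μ Z (1 - a) (by linarith) (by linarith)
  have hc : 0 < 1 - (1 - q)⁻¹ * a := by
    have : (1 - q)⁻¹ * a < 1 := by
      rw [inv_mul_lt_iff₀ (by linarith)]; linarith
    linarith
  set d := 1 - (1 - q)⁻¹ * a with hd
  set t := (|x| + 1) / d with htd
  have ht : 0 < t := by positivity
  have htm : t * d = |x| + 1 := by rw [htd]; field_simp
  have h' := h (A.indicator (fun _ => t)) ((integrable_const t).indicator hA)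
  rw [aux_ES μ A hA t ht q hq0.le hq1 (by linarith)] at h'
  have h2 : ES μ (A.indicator (fun _ => t)) (1 - a) - VaR μ Z (1 - a)
      ≤ (((1 - q)⁻¹ * (a * t) : ℝ) : EReal) := by
    rw [h']
    exact le_iSup₂_of_le (1 - a) ⟨by linarith, by linarith⟩ le_rfl
  rw [aux_ES μ A hA t ht (1 - a) (by linarith) (by linarith) le_rfl] at h2
  have h3 := (EReal.sub_le_sub le_rfl hx).trans h2
  rw [← EReal.coe_sub, EReal.coe_le_coe_iff, ← ha] at h3
  have h4 : (1 - (1 - a))⁻¹ * (a * t) = t := by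
    rw [sub_sub_cancel]; field_simp
  rw [h4] at h3
  have h5 : t * d = t - (1 - q)⁻¹ * (a * t) := by rw [hd]; ring
  have := le_abs_self x
  linarith
end
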